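/- Let C be a quasiminimal pregeometry class, H ∈ C, X ⊆ H countable, and a, b ∈ H \ cl(X). Then a and b realise the same σ-type over X: for every L_{ω₁,ω}-formula φ(v) with parameters from X, H ⊨ φ(a) if and only if H ⊨ φ(b). -/

import Mathlib

open FirstOrder FirstOrder.Language Set Cardinal



universe u u' v w

namespace QM

variable {L : FirstOrder.Language.{v, w}}

/-- Formulas of `L_{ω₁,ω}`: built from atomic formulas by negation, countable
conjunction (indexed by `ℕ`), and universal quantification; `α` is the type of free
variables and `n` counts the de Bruijn bound variables. Countable disjunctions and
the existential quantifier are definable via negation. -/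
inductive InfFormula (L : FirstOrder.Language.{v, w}) (α : Type u) : ℕ → Type (max u v w)
  | falsum {n : ℕ} : InfFormula L α n
  | equal {n : ℕ} (t₁ t₂ : L.Term (α ⊕ (Fin n))) : InfFormula L α n
  | rel {n l : ℕ} (R : L.Relations l) (ts : Fin l → L.Term (α ⊕ (Fin n))) : InfFormula L α n
  | not {n : ℕ} (φ : InfFormula L α n) : InfFormula L α n
  | iInf {n : ℕ} (φ : ℕ → InfFormula L α n) : InfFormula L α n
  | all {n : ℕ} (φ : InfFormula L α (n + 1)) : InfFormula L α n

/-- Satisfaction of an `L_{ω₁,ω}`-formula in an `L`-structure `M`, given an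
assignment `v` of the free variables and `xs` of the bound variables. -/
def InfFormula.Realize {M : Type u'} [L.Structure M] {α : Type u} :
    ∀ {n : ℕ}, InfFormula L α n → (α → M) → (Fin n → M) → Prop
  | _, .falsum, _, _ => False
  | _, .equal t₁ t₂, v, xs => t₁.realize (Sum.elim v xs) = t₂.realize (Sum.elim v xs)
  | _, .rel R ts, v, xs => Structure.RelMap R (fun i => (ts i).realize (Sum.elim v xs))
  | _, .not φ, v, xs => ¬ φ.Realize v xs
  | _, .iInf φ, v, xs => ∀ i : ℕ, (φ i).Realize v xs
  | _, .all φ, v, xs => ∀ x : M, φ.Realize v (Fin.snoc xs x)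

/-- An `L_{ω₁,ω}`-sentence. -/
abbrev InfSentence (L : FirstOrder.Language.{v, w}) := InfFormula L PEmpty 0

/-- Satisfaction of an `L_{ω₁,ω}`-sentence. -/
def InfSentence.RealizeS (M : Type u') [L.Structure M] (φ : InfSentence L) : Prop :=
  InfFormula.Realize (M := M) φ PEmpty.elim (fun i => i.elim0)

/-- Satisfaction of an `L_{ω₁,ω}`-formula with parameters from the set `A`
and `m` free variables `v̄`, at the tuple `v`. -/
def InfFormula.RealizeP {M : Type u'} [L.Structure M] {A : Set M} {m : ℕ}
    (φ : InfFormula L (↥A ⊕ Fin m) 0) (v : Fin m → M) : Prop :=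
  φ.Realize (Sum.elim Subtype.val v) (fun i => i.elim0)

/-- The domain of a partial map, viewed as a graph (set of pairs). -/
def pdom {H : Type*} {H' : Type*} (p : Set (H × H')) : Set H := Prod.fst '' p

/-- The image of a partial map, viewed as a graph (set of pairs). -/
def pimg {H : Type*} {H' : Type*} (p : Set (H × H')) : Set H' := Prod.snd '' p

/-- The image of a set `X` under a partial map given as a graph. -/
def pimage {H : Type*} {H' : Type*} (p : Set (H × H')) (X : Set H) : Set H' :=
  {b | ∃ a ∈ X, (a, b) ∈ p}

/-- A partial map (given as its graph `p`) is a partial embedding if it preserves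
quantifier-free first-order formulas. (This forces `p` to be the graph of an
injective partial function.) -/
def IsPartialEmbedding {H : Type u} {H' : Type u} [L.Structure H] [L.Structure H']
    (p : Set (H × H')) : Prop :=
  ∀ (n : ℕ) (φ : L.Formula (Fin n)), BoundedFormula.IsQF φ →
    ∀ (a : Fin n → H) (b : Fin n → H'), (∀ i, (a i, b i) ∈ p) →
      (φ.Realize a ↔ φ.Realize b)

/-- A partial map is a σ-embedding if it is a partial embedding and preserves all
`L_{ω₁,ω}`-formulas with (possibly infinitely many) parameters from its domain;
equivalently `⟨M, m⟩_{m ∈ dom p} ≡_{ω₁,ω} ⟨N, p(m)⟩_{m ∈ dom p}`. -/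
def IsSigmaEmbedding {H : Type u} {H' : Type u} [L.Structure H] [L.Structure H']
    (p : Set (H × H')) : Prop :=
  IsPartialEmbedding (L := L) p ∧
    ∀ (φ : InfFormula L (↥(pdom p)) 0) (b : ↥(pdom p) → H'),
      (∀ x : ↥(pdom p), ((x : H), b x) ∈ p) →
        (φ.Realize Subtype.val (fun i => i.elim0) ↔ φ.Realize b (fun i => i.elim0))

/-- A pregeometry (combinatorial geometry) on a set. -/
structure IsPregeometry {α : Type*} (cl : Set α → Set α) : Prop where
  subset_cl : ∀ X, X ⊆ cl X
  mono : ∀ ⦃X Y : Set α⦄, X ⊆ Y → cl X ⊆ cl Y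
  idem : ∀ X, cl (cl X) = cl X
  finChar : ∀ (X : Set α) (y : α), y ∈ cl X → ∃ F : Finset α, ↑F ⊆ X ∧ y ∈ cl ↑F
  exchange : ∀ (X : Set α) (a b : α), a ∈ cl (X ∪ {b}) → a ∉ cl X → b ∈ cl (X ∪ {a})

/-- A pair `⟨H, cl_H⟩` of an `L`-structure and a closure operator on it. -/
structure QMObj (L : FirstOrder.Language.{v, w}) where
  carrier : Type u
  [str : L.Structure carrier]
  cl : Set carrier → Set carrier

attribute [instance] QMObj.str

/-- `G` is countable and closed, or empty. -/
def CCOE (H : QMObj.{u} L) (G : Set H.carrier) : Prop :=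
  (G.Countable ∧ H.cl G = G) ∨ G = ∅

/-- The axioms for a class of pairs `⟨H, cl_H⟩` to be a quasiminimal pregeometry class. -/
structure IsQMClass (C : Set (QMObj.{u} L)) : Prop where
  /-- Closure under isomorphisms, transporting the closure operator. -/
  iso_closed : ∀ H ∈ C, ∀ (N : Type u) [_iN : L.Structure N] (f : H.carrier ≃[L] N),
      (⟨N, fun X => f '' (H.cl (f ⁻¹' X))⟩ : QMObj L) ∈ C
  /-- Any two members satisfy the same quantifier-free sentences. -/
  qf_theory : ∀ H ∈ C, ∀ H' ∈ C, ∀ (φ : L.Sentence), BoundedFormula.IsQF φ →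
      (H.carrier ⊨ φ ↔ H'.carrier ⊨ φ)
  /-- Each `cl_H` is a pregeometry. -/
  pregeom : ∀ H ∈ C, IsPregeometry H.cl
  /-- The closure of a finite set is countable. -/
  cl_finite_countable : ∀ H ∈ C, ∀ X : Set H.carrier, X.Finite → (H.cl X).Countable
  /-- The closure of any set is (the underlying set of) a substructure which, with the
  restricted closure operator, is again a member of the class. -/
  cl_mem : ∀ H ∈ C, ∀ X : Set H.carrier, ∃ S : L.Substructure H.carrier,
      (S : Set H.carrier) = H.cl X ∧
      (⟨↥S, fun Y => Subtype.val ⁻¹' (H.cl (Subtype.val '' Y))⟩ : QMObj L) ∈ C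
  /-- Partial embeddings preserve and reflect the closure relation. -/
  cl_embedding : ∀ H ∈ C, ∀ H' ∈ C, ∀ (p : Set (H.carrier × H'.carrier)),
      IsPartialEmbedding (L := L) p → ∀ X ⊆ pdom p, ∀ (y : H.carrier) (y' : H'.carrier),
        (y, y') ∈ p → (y ∈ H.cl X ↔ y' ∈ H'.cl (pimage p X))
  /-- ℵ₀-homogeneity over countable closed models, part (i): an isomorphism between
  countable closed (or empty) sets extends by any pair of independent points. -/
  homogeneity₁ : ∀ H ∈ C, ∀ H' ∈ C, ∀ (g : Set (H.carrier × H'.carrier)),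
      CCOE H (pdom g) → CCOE H' (pimg g) → IsPartialEmbedding (L := L) g →
      ∀ (x : H.carrier) (x' : H'.carrier), x ∉ H.cl (pdom g) → x' ∉ H'.cl (pimg g) →
        IsPartialEmbedding (L := L) (g ∪ {(x, x')})
  /-- ℵ₀-homogeneity over countable closed models, part (ii). -/
  homogeneity₂ : ∀ H ∈ C, ∀ H' ∈ C, ∀ (g f : Set (H.carrier × H'.carrier)),
      CCOE H (pdom g) → CCOE H' (pimg g) → IsPartialEmbedding (L := L) g →
      (pdom f).Finite → IsPartialEmbedding (L := L) (g ∪ f) →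
      ∀ y ∈ H.cl (pdom f ∪ pdom g), ∃ y' : H'.carrier,
        IsPartialEmbedding (L := L) (g ∪ f ∪ {(y, y')})


/-- `p` is a σ-type over `A` in `m` variables: every countable subset of `p` is
consistent with the structure, i.e. simultaneously satisfiable. -/
def IsSigmaType {M : Type u'} [L.Structure M] {A : Set M} {m : ℕ}
    (p : Set (InfFormula L (↥A ⊕ Fin m) 0)) : Prop :=
  ∀ Φ ⊆ p, Φ.Countable → ∃ v : Fin m → M, ∀ φ ∈ Φ, φ.RealizeP v

/-- A σ-type `p` is isolated if there is a consistent `L_{ω₁,ω}`-formula `ψ(x̄)`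
(possibly with parameters from `M`) such that `ψ` implies every formula of `p`. -/
def IsIsolated {M : Type u'} [L.Structure M] {A : Set M} {m : ℕ}
    (p : Set (InfFormula L (↥A ⊕ Fin m) 0)) : Prop :=
  ∃ ψ : InfFormula L (M ⊕ Fin m) 0,
    (∃ v : Fin m → M, ψ.Realize (Sum.elim id v) (fun i => i.elim0)) ∧
    ∀ φ ∈ p, ∀ v : Fin m → M, ψ.Realize (Sum.elim id v) (fun i => i.elim0) → φ.RealizeP v

/-- A σ-type `p` is realised if some tuple satisfies every formula of `p`. -/
def IsRealized {M : Type u'} [L.Structure M] {A : Set M} {m : ℕ}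
    (p : Set (InfFormula L (↥A ⊕ Fin m) 0)) : Prop :=
  ∃ v : Fin m → M, ∀ φ ∈ p, φ.RealizeP v

/-- `B` is an independent subset of the pregeometry `⟨H, cl_H⟩`. -/
def IsIndep (H : QMObj.{u} L) (B : Set H.carrier) : Prop :=
  ∀ x ∈ B, x ∉ H.cl (B \ {x})

/-- `B` is a basis of the pregeometry `⟨H, cl_H⟩`: a maximal independent subset. -/
def IsBasis (H : QMObj.{u} L) (B : Set H.carrier) : Prop :=
  IsIndep H B ∧ ∀ B' : Set H.carrier, B ⊆ B' → IsIndep H B' → B' = B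

/-- The model-theoretic algebraic closure of `X` in `M`: the set of elements
satisfying some first-order formula with parameters in `X` having finitely many
solutions. -/
def aclS (L : FirstOrder.Language.{v, w}) (M : Type u) [L.Structure M] (X : Set M) :
    Set M :=
  {y | ∃ (n : ℕ) (φ : L.BoundedFormula (Fin n) 1) (v : Fin n → M),
    (∀ i, v i ∈ X) ∧ φ.Realize v ![y] ∧ {z : M | φ.Realize v ![z]}.Finite}

/-!
Partial embeddings with the back-and-forth property preserve `L_{ω₁,ω}`-formulas (Karp), so it
suffices to find a back-and-forth system with a member fixing `X` and sending `a` to `b`. The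
isomorphisms between countable closed sets need not form one: when `H` has dimension `ℵ₀`, such an
isomorphism may have image `H` and a proper subset of `H` as its domain. The *automorphisms* of
countable closed sets do, because a point outside the domain is then outside the image too and may
be sent to itself.

For the member sending `a` to `b`, extend the identity of `cl X` by `a ↦ b` to an isomorphism
`cl(Xa) ≅ cl(Xb)`. If `b ∈ cl(Xa)`, the two closures agree by exchange; otherwise extend further by
`b ↦ a` to an automorphism of `cl(Xab)`.
-/

section Graph

variable {M N : Type*}

theorem pdom_mono {p q : Set (M × N)} (h : p ⊆ q) : pdom p ⊆ pdom q :=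
  image_mono h

theorem pimg_mono {p q : Set (M × N)} (h : p ⊆ q) : pimg p ⊆ pimg q :=
  image_mono h

theorem pdom_insert (x : M) (y : N) (p : Set (M × N)) :
    pdom (insert (x, y) p) = insert x (pdom p) :=
  image_insert_eq

theorem pimg_insert (x : M) (y : N) (p : Set (M × N)) :
    pimg (insert (x, y) p) = insert y (pimg p) :=
  image_insert_eq

theorem pdom_inv (p : Set (M × N)) : pdom (SetRel.inv p) = pimg p := by
  ext y
  simp [pdom, pimg, SetRel.inv]

theorem pimg_inv (p : Set (M × N)) : pimg (SetRel.inv p) = pdom p := by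
  ext x
  simp [pdom, pimg, SetRel.inv]

theorem inv_insert (x : M) (y : N) (p : Set (M × N)) :
    SetRel.inv (insert (y, x) (SetRel.inv p)) = insert (x, y) p := by
  ext ⟨x', y'⟩
  simp [SetRel.inv, and_comm]

end Graph

section PartialEmbedding

variable {M N : Type u} [L.Structure M] [L.Structure N] {p q : Set (M × N)}

theorem isQF_restrictFreeVar {α β : Type*} [DecidableEq α] {n : ℕ} {φ : L.BoundedFormula α n}
    (hφ : φ.IsQF) (f : φ.freeVarFinset → β) : (φ.restrictFreeVar f).IsQF := by
  induction hφ with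
  | falsum => exact .falsum
  | of_isAtomic hφ =>
    cases hφ with
    | equal => exact (BoundedFormula.IsAtomic.equal _ _).isQF
    | rel => exact (BoundedFormula.IsAtomic.rel _ _).isQF
  | imp _ _ ih₁ ih₂ => exact (ih₁ _).imp (ih₂ _)

theorem IsPartialEmbedding.realize_iff (hp : IsPartialEmbedding (L := L) p) {α : Type*}
    {φ : L.Formula α} (hφ : φ.IsQF) {v : α → M} {w : α → N} (hvw : ∀ i, (v i, w i) ∈ p) :
    φ.Realize v ↔ φ.Realize w := by
  classical
  let e := φ.freeVarFinset.equivFin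
  have restrict {K : Type u} [L.Structure K] (z : α → K) :
      Formula.Realize (φ.restrictFreeVar e) (fun i => z (e.symm i)) ↔ φ.Realize z :=
    BoundedFormula.realize_restrictFreeVar z (by simp)
  rw [← restrict v, ← restrict w]
  exact hp _ _ (isQF_restrictFreeVar hφ e) _ _ fun i => hvw (e.symm i)

theorem IsPartialEmbedding.mono (hp : IsPartialEmbedding (L := L) p) (h : q ⊆ p) :
    IsPartialEmbedding (L := L) q :=
  fun n φ hφ a b hab => hp n φ hφ a b fun i => h (hab i)

theorem IsPartialEmbedding.inv (hp : IsPartialEmbedding (L := L) p) :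
    IsPartialEmbedding (L := L) (SetRel.inv p) :=
  fun n φ hφ a b hab => (hp n φ hφ b a hab).symm

theorem isPartialEmbedding_sUnion {S : Set (Set (M × N))} (hne : S.Nonempty)
    (hdir : DirectedOn (· ⊆ ·) S) (hS : ∀ p ∈ S, IsPartialEmbedding (L := L) p) :
    IsPartialEmbedding (L := L) (⋃₀ S) := by
  intro n φ hφ a b hab
  obtain ⟨p, hp, hsub⟩ := hdir.exists_mem_subset_of_finite_of_subset_sUnion hne
    (finite_range fun i => (a i, b i)) (range_subset_iff.2 hab)
  exact hS p hp n φ hφ a b (range_subset_iff.1 hsub)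

theorem isPartialEmbedding_diag (X : Set M) :
    IsPartialEmbedding (L := L) ((fun x => (x, x)) '' X) := by
  intro n φ _ a b hab
  have : a = b := by
    ext i
    obtain ⟨x, -, hx⟩ := hab i
    exact (congrArg Prod.fst hx).symm.trans (congrArg Prod.snd hx)
  rw [this]

theorem IsPartialEmbedding.eq_of_mem_of_mem (hp : IsPartialEmbedding (L := L) p) {x : M} {y y' : N}
    (h : (x, y) ∈ p) (h' : (x, y') ∈ p) : y = y' := by
  have := hp.realize_iff (φ := Term.equal (L := L) (Term.var true) (Term.var false))
    (BoundedFormula.IsAtomic.equal _ _).isQF (v := fun _ => x) (w := fun i => cond i y y')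
    (Bool.rec h' h)
  simpa [Formula.realize_equal] using this

theorem IsPartialEmbedding.pimage_pdom (hp : IsPartialEmbedding (L := L) p) (hqp : q ⊆ p) :
    pimage p (pdom q) = pimg q := by
  ext y
  constructor
  · rintro ⟨_, ⟨⟨x, y'⟩, hq, rfl⟩, hy⟩
    exact ⟨_, hq, hp.eq_of_mem_of_mem (hqp hq) hy⟩
  · rintro ⟨⟨x, y⟩, hq, rfl⟩
    exact ⟨x, ⟨_, hq, rfl⟩, hqp hq⟩

end PartialEmbedding

section BackAndForth

variable {M N : Type u} [L.Structure M] [L.Structure N] {A : Set M} {B : Set N}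
  {S : Set (Set (M × N))} {p : Set (M × N)}

/-- `S` is a back-and-forth system of partial embeddings (given by their graphs) over `A` and `B`:
each member extends within `S` so as to have any given point of `A` in its domain, and so as to have
any given point of `B` in its image. Karp's theorem is about `A = univ`, `B = univ`; countable `A`
and `B` serve to build isomorphisms between countable closed sets. -/
structure IsBackAndForth (L : FirstOrder.Language.{v, w}) {M N : Type u} [L.Structure M]
    [L.Structure N] (A : Set M) (B : Set N) (S : Set (Set (M × N))) : Prop where
  isPartialEmbedding : ∀ p ∈ S, IsPartialEmbedding (L := L) p
  forth : ∀ p ∈ S, ∀ x ∈ A, ∃ q ∈ S, p ⊆ q ∧ x ∈ pdom q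
  back : ∀ p ∈ S, ∀ y ∈ B, ∃ q ∈ S, p ⊆ q ∧ y ∈ pimg q

theorem IsBackAndForth.exists_isPartialEmbedding (hS : IsBackAndForth L A B S) (hA : A.Countable)
    (hB : B.Countable) (hp : p ∈ S) :
    ∃ q, p ⊆ q ∧ q ⊆ ⋃₀ S ∧ IsPartialEmbedding (L := L) q ∧ A ⊆ pdom q ∧ B ⊆ pimg q := by
  have := hA.to_subtype
  have := hB.to_subtype
  let _ : Encodable (A ⊕ B) := Encodable.ofCountable _
  let 𝒟 : A ⊕ B → Order.Cofinal S := Sum.elim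
    (fun x => ⟨{q | x.1 ∈ pdom q.1}, fun q =>
      have ⟨q', hq', hqq', hx⟩ := hS.forth q q.2 x x.2
      ⟨⟨q', hq'⟩, hx, hqq'⟩⟩)
    (fun y => ⟨{q | y.1 ∈ pimg q.1}, fun q =>
      have ⟨q', hq', hqq', hy⟩ := hS.back q q.2 y y.2
      ⟨⟨q', hq'⟩, hy, hqq'⟩⟩)
  let I := Order.idealOfCofinals ⟨p, hp⟩ 𝒟
  let T : Set (Set (M × N)) := Subtype.val '' (I : Set S)
  have hTS : T ⊆ S := Subtype.coe_image_subset S _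
  have hpT : p ∈ T := ⟨_, Order.mem_idealOfCofinals _ 𝒟, rfl⟩
  have hdir : DirectedOn (· ⊆ ·) T := directedOn_image.2 I.directed
  refine ⟨⋃₀ T, subset_sUnion_of_mem hpT, sUnion_subset_sUnion hTS,
    isPartialEmbedding_sUnion ⟨p, hpT⟩ hdir fun q hq => hS.isPartialEmbedding q (hTS hq), ?_, ?_⟩
  · intro x hx
    obtain ⟨q, hxq, hq⟩ := Order.cofinal_meets_idealOfCofinals ⟨p, hp⟩ 𝒟 (Sum.inl ⟨x, hx⟩)
    exact pdom_mono (subset_sUnion_of_mem (mem_image_of_mem _ hq)) hxq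
  · intro y hy
    obtain ⟨q, hyq, hq⟩ := Order.cofinal_meets_idealOfCofinals ⟨p, hp⟩ 𝒟 (Sum.inr ⟨y, hy⟩)
    exact pimg_mono (subset_sUnion_of_mem (mem_image_of_mem _ hq)) hyq

theorem snoc_mem {n : ℕ} {xs : Fin n → M} {ys : Fin n → N} {x : M} {y : N}
    (h : ∀ i, (xs i, ys i) ∈ p) (hxy : (x, y) ∈ p) (i : Fin (n + 1)) :
    ((Fin.snoc xs x : Fin (n + 1) → M) i, (Fin.snoc ys y : Fin (n + 1) → N) i) ∈ p := by
  cases i using Fin.lastCases with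
  | last => simpa using hxy
  | cast i => simpa using h i

theorem IsBackAndForth.realize_iff (hS : IsBackAndForth L univ univ S) {α : Type u'} {n : ℕ}
    (φ : InfFormula L α n) (hp : p ∈ S) {v : α → M} {w : α → N} {xs : Fin n → M} {ys : Fin n → N}
    (hvw : ∀ i, (v i, w i) ∈ p) (hxy : ∀ i, (xs i, ys i) ∈ p) :
    φ.Realize v xs ↔ φ.Realize w ys := by
  induction φ generalizing p with
  | falsum => rfl
  | equal t₁ t₂ =>
    have := (hS.isPartialEmbedding p hp).realize_iff (φ := t₁.equal t₂)
      (BoundedFormula.IsAtomic.equal _ _).isQF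
      (v := Sum.elim v xs) (w := Sum.elim w ys) (Sum.rec hvw hxy)
    simpa only [Formula.realize_equal, InfFormula.Realize] using this
  | rel R ts =>
    have := (hS.isPartialEmbedding p hp).realize_iff (φ := R.formula ts)
      (BoundedFormula.IsAtomic.rel _ _).isQF
      (v := Sum.elim v xs) (w := Sum.elim w ys) (Sum.rec hvw hxy)
    simpa only [Formula.realize_rel, InfFormula.Realize] using this
  | not φ ih => exact not_congr (ih hp hvw hxy)
  | iInf φ ih => exact forall_congr' fun i => ih i hp hvw hxy
  | all φ ih =>
    constructor
    · intro h y
      obtain ⟨q, hq, hpq, ⟨x, _⟩, hxq, rfl⟩ := hS.back p hp y (mem_univ y)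
      exact (ih hq (fun i => hpq (hvw i)) (snoc_mem (fun i => hpq (hxy i)) hxq)).1 (h x)
    · intro h x
      obtain ⟨q, hq, hpq, ⟨_, y⟩, hyq, rfl⟩ := hS.forth p hp x (mem_univ x)
      exact (ih hq (fun i => hpq (hvw i)) (snoc_mem (fun i => hpq (hxy i)) hyq)).2 (h y)

end BackAndForth

namespace IsPregeometry

variable {α : Type*} {cl : Set α → Set α} {X : Set α} {a b : α}

theorem cl_subset_iff (h : IsPregeometry cl) {X Y : Set α} : cl X ⊆ cl Y ↔ X ⊆ cl Y :=
  ⟨(h.subset_cl X).trans, fun hX => h.idem Y ▸ h.mono hX⟩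

theorem cl_insert_cl (h : IsPregeometry cl) (a : α) (X : Set α) :
    cl (insert a (cl X)) = cl (insert a X) := by
  refine (h.cl_subset_iff.2 ?_).antisymm (h.mono (insert_subset_insert (h.subset_cl X)))
  exact insert_subset (h.subset_cl _ (mem_insert a X)) (h.mono (subset_insert a X))

theorem mem_cl_insert_of_mem_cl_insert (h : IsPregeometry cl) (ha : a ∉ cl X)
    (hab : a ∈ cl (insert b X)) : b ∈ cl (insert a X) := by
  rw [← union_singleton] at hab ⊢
  exact h.exchange X a b hab ha

theorem cl_insert_eq_cl_insert (h : IsPregeometry cl) (ha : a ∉ cl X)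
    (hab : a ∈ cl (insert b X)) : cl (insert a X) = cl (insert b X) := by
  have sub {c d : α} (hcd : c ∈ cl (insert d X)) : cl (insert c X) ⊆ cl (insert d X) :=
    h.cl_subset_iff.2 (insert_subset hcd ((subset_insert d X).trans (h.subset_cl _)))
  exact (sub hab).antisymm (sub (h.mem_cl_insert_of_mem_cl_insert ha hab))

end IsPregeometry

section FiniteExtensions

variable {H H' : QMObj.{u} L} {g r p : Set (H.carrier × H'.carrier)}

/-- The finite approximations to an isomorphism of `cl (pdom r)` with `cl (pimg r)` extending `r`:
the partial embeddings that extend `r`, take place inside those closures, and differ from `g` by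
finitely many pairs. Here `g` is meant to be an isomorphism of countable closed sets, over which
ℵ₀-homogeneity applies. -/
def finiteExtensions (H H' : QMObj.{u} L) (g r : Set (H.carrier × H'.carrier)) :
    Set (Set (H.carrier × H'.carrier)) :=
  {p | r ⊆ p ∧ (p \ g).Finite ∧ IsPartialEmbedding (L := L) p ∧
    p ⊆ H.cl (pdom r) ×ˢ H'.cl (pimg r)}

theorem inv_mem_finiteExtensions (hp : p ∈ finiteExtensions H H' g r) :
    SetRel.inv p ∈ finiteExtensions H' H (SetRel.inv g) (SetRel.inv r) := by
  obtain ⟨hrp, hfin, hpe, hsub⟩ := hp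
  have hfin_inv : (Prod.swap ⁻¹' (p \ g)).Finite := hfin.preimage Prod.swap_injective.injOn
  refine ⟨preimage_mono hrp, hfin_inv, hpe.inv, ?_⟩
  rw [pdom_inv, pimg_inv]
  exact fun z hz => (hsub hz).symm

end FiniteExtensions

theorem CCOE.countable {H : QMObj.{u} L} {G : Set H.carrier} (hG : CCOE H G) : G.Countable :=
  hG.elim And.left fun h => h ▸ countable_empty

/-- `g` is the graph of an isomorphism of `cl X` with `cl X'`. -/
structure IsClosureIso (H H' : QMObj.{u} L) (g : Set (H.carrier × H'.carrier))
    (X : Set H.carrier) (X' : Set H'.carrier) : Prop where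
  isPartialEmbedding : IsPartialEmbedding (L := L) g
  pdom_eq : pdom g = H.cl X
  pimg_eq : pimg g = H'.cl X'

theorem isClosureIso_diag (H : QMObj.{u} L) (X : Set H.carrier) :
    IsClosureIso H H ((fun x => (x, x)) '' H.cl X) X X where
  isPartialEmbedding := isPartialEmbedding_diag _
  pdom_eq := by simp [pdom, image_image]
  pimg_eq := by simp [pimg, image_image]

namespace IsQMClass

variable {C : Set (QMObj.{u} L)} {H H' : QMObj.{u} L} {g r p : Set (H.carrier × H'.carrier)}
  {X : Set H.carrier} {X' : Set H'.carrier}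

theorem countable_cl (hC : IsQMClass C) (hH : H ∈ C) (hX : X.Countable) : (H.cl X).Countable := by
  refine ((countable_ofPred_finite_subset hX).biUnion fun F hF =>
    hC.cl_finite_countable H hH F hF.1).mono fun y hy => ?_
  obtain ⟨F, hFX, hyF⟩ := (hC.pregeom H hH).finChar X y hy
  exact mem_iUnion₂.2 ⟨F, ⟨F.finite_toSet, hFX⟩, hyF⟩

theorem ccoe_cl (hC : IsQMClass C) (hH : H ∈ C) (hX : X.Countable) : CCOE H (H.cl X) :=
  Or.inl ⟨hC.countable_cl hH hX, (hC.pregeom H hH).idem X⟩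

theorem mem_cl_pimg (hC : IsQMClass C) (hH : H ∈ C) (hH' : H' ∈ C)
    (hp : IsPartialEmbedding (L := L) p) (hrp : r ⊆ p) {x : H.carrier} {x' : H'.carrier}
    (hx : (x, x') ∈ p) (hxr : x ∈ H.cl (pdom r)) : x' ∈ H'.cl (pimg r) := by
  rw [← hp.pimage_pdom hrp]
  exact (hC.cl_embedding H hH H' hH' p hp _ (pdom_mono hrp) x x' hx).1 hxr

theorem exists_insert_mem_finiteExtensions (hC : IsQMClass C) (hH : H ∈ C) (hH' : H' ∈ C)
    (hd : CCOE H (pdom g)) (hi : CCOE H' (pimg g)) (hgr : g ⊆ r)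
    (hp : p ∈ finiteExtensions H H' g r) {x : H.carrier} (hx : x ∈ H.cl (pdom r)) :
    ∃ x', insert (x, x') p ∈ finiteExtensions H H' g r := by
  obtain ⟨hrp, hfin, hpe, hsub⟩ := hp
  have hgp : g ∪ p \ g = p := union_sdiff_cancel (hgr.trans hrp)
  have hxp : x ∈ H.cl (pdom (p \ g) ∪ pdom g) := by
    rw [pdom, pdom, ← image_union, union_comm, hgp]
    exact (hC.pregeom H hH).mono (pdom_mono hrp) hx
  obtain ⟨x', hx'⟩ := hC.homogeneity₂ H hH H' hH' g (p \ g) hd hi (hpe.mono (hgr.trans hrp))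
    (hfin.image _) (by rwa [hgp]) x hxp
  rw [hgp, union_singleton] at hx'
  have hrp' : r ⊆ insert (x, x') p := hrp.trans (subset_insert _ _)
  have hx'_cl : x' ∈ H'.cl (pimg r) := hC.mem_cl_pimg hH hH' hx' hrp' (mem_insert _ _) hx
  exact ⟨x', hrp', (hfin.insert (x, x')).subset insert_sdiff_subset, hx',
    insert_subset ⟨hx, hx'_cl⟩ hsub⟩

theorem isBackAndForth_finiteExtensions (hC : IsQMClass C) (hH : H ∈ C) (hH' : H' ∈ C)
    (hd : CCOE H (pdom g)) (hi : CCOE H' (pimg g)) (hgr : g ⊆ r) :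
    IsBackAndForth L (H.cl (pdom r)) (H'.cl (pimg r)) (finiteExtensions H H' g r) where
  isPartialEmbedding _ hp := hp.2.2.1
  forth p hp x hx := by
    obtain ⟨x', hx'⟩ := hC.exists_insert_mem_finiteExtensions hH hH' hd hi hgr hp hx
    exact ⟨_, hx', subset_insert _ _, _, mem_insert _ _, rfl⟩
  back p hp y hy := by
    rw [← pimg_inv] at hd
    rw [← pdom_inv] at hi hy
    obtain ⟨x, hx⟩ := hC.exists_insert_mem_finiteExtensions hH' hH hi hd (preimage_mono hgr)
      (inv_mem_finiteExtensions hp) hy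
    have hx := inv_mem_finiteExtensions hx
    rw [inv_insert] at hx
    exact ⟨_, hx, subset_insert _ _, _, mem_insert _ _, rfl⟩

theorem exists_isClosureIso (hC : IsQMClass C) (hH : H ∈ C) (hH' : H' ∈ C)
    (hd : CCOE H (pdom g)) (hi : CCOE H' (pimg g)) (hgr : g ⊆ r) (hfin : (r \ g).Finite)
    (hr : IsPartialEmbedding (L := L) r) :
    ∃ h, IsClosureIso H H' h (pdom r) (pimg r) ∧ r ⊆ h := by
  have hr_eq : g ∪ r \ g = r := union_sdiff_cancel hgr
  have hdom : (pdom r).Countable := by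
    rw [← hr_eq, pdom, image_union]
    exact hd.countable.union (hfin.image _).countable
  have himg : (pimg r).Countable := by
    rw [← hr_eq, pimg, image_union]
    exact hi.countable.union (hfin.image _).countable
  have hr_mem : r ∈ finiteExtensions H H' g r := ⟨Subset.rfl, hfin, hr, fun z hz =>
    ⟨(hC.pregeom H hH).subset_cl _ ⟨z, hz, rfl⟩, (hC.pregeom H' hH').subset_cl _ ⟨z, hz, rfl⟩⟩⟩
  obtain ⟨h, hrh, hsub, hh, hdom_sub, himg_sub⟩ :=
    (hC.isBackAndForth_finiteExtensions hH hH' hd hi hgr).exists_isPartialEmbedding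
      (hC.countable_cl hH hdom) (hC.countable_cl hH' himg) hr_mem
  have h_prod : h ⊆ H.cl (pdom r) ×ˢ H'.cl (pimg r) :=
    hsub.trans (sUnion_subset fun p hp => hp.2.2.2)
  exact ⟨h, ⟨hh, (image_subset_iff.2 fun z hz => (h_prod hz).1).antisymm hdom_sub,
    (image_subset_iff.2 fun z hz => (h_prod hz).2).antisymm himg_sub⟩, hrh⟩

theorem exists_isClosureIso_insert (hC : IsQMClass C) (hH : H ∈ C) (hH' : H' ∈ C)
    (hX : X.Countable) (hX' : X'.Countable) (hg : IsClosureIso H H' g X X') {x : H.carrier}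
    {x' : H'.carrier} (hx : x ∉ H.cl X) (hx' : x' ∉ H'.cl X') :
    ∃ h, IsClosureIso H H' h (insert x X) (insert x' X') ∧ g ⊆ h ∧ (x, x') ∈ h := by
  have P := hC.pregeom H hH
  have P' := hC.pregeom H' hH'
  have hd : CCOE H (pdom g) := hg.pdom_eq ▸ hC.ccoe_cl hH hX
  have hi : CCOE H' (pimg g) := hg.pimg_eq ▸ hC.ccoe_cl hH' hX'
  have hr : IsPartialEmbedding (L := L) (insert (x, x') g) := by
    rw [← union_singleton]
    exact hC.homogeneity₁ H hH H' hH' g hd hi hg.isPartialEmbedding x x'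
      (by rwa [hg.pdom_eq, P.idem]) (by rwa [hg.pimg_eq, P'.idem])
  obtain ⟨h, hh, hrh⟩ := hC.exists_isClosureIso hH hH' hd hi (subset_insert (x, x') g)
    ((finite_singleton (x, x')).subset fun z hz => hz.1.resolve_right hz.2) hr
  refine ⟨h, ⟨hh.isPartialEmbedding, ?_, ?_⟩, (subset_insert _ _).trans hrh, hrh (mem_insert _ _)⟩
  · rw [hh.pdom_eq, pdom_insert, hg.pdom_eq, P.cl_insert_cl]
  · rw [hh.pimg_eq, pimg_insert, hg.pimg_eq, P'.cl_insert_cl]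

end IsQMClass

/-- The automorphisms of countable closed subsets of `H`, as graphs. A countable closed set is
encoded as the closure of a countable set. -/
def closedAutomorphisms (H : QMObj.{u} L) : Set (Set (H.carrier × H.carrier)) :=
  {p | ∃ X : Set H.carrier, X.Countable ∧ IsClosureIso H H p X X}

namespace IsQMClass

variable {C : Set (QMObj.{u} L)} {H : QMObj.{u} L} {X : Set H.carrier}

theorem exists_closedAutomorphism_extension (hC : IsQMClass C) (hH : H ∈ C)
    {p : Set (H.carrier × H.carrier)} (hp : p ∈ closedAutomorphisms H) (z : H.carrier) :
    ∃ q ∈ closedAutomorphisms H, p ⊆ q ∧ z ∈ pdom q ∧ z ∈ pimg q := by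
  obtain ⟨X, hX, hp⟩ := hp
  by_cases hz : z ∈ H.cl X
  · exact ⟨p, ⟨X, hX, hp⟩, Subset.rfl, hp.pdom_eq ▸ hz, hp.pimg_eq ▸ hz⟩
  · obtain ⟨q, hq, hpq, hzq⟩ := hC.exists_isClosureIso_insert hH hH hX hX hp hz hz
    exact ⟨q, ⟨_, hX.insert z, hq⟩, hpq, ⟨_, hzq, rfl⟩, ⟨_, hzq, rfl⟩⟩

theorem isBackAndForth_closedAutomorphisms (hC : IsQMClass C) (hH : H ∈ C) :
    IsBackAndForth L univ univ (closedAutomorphisms H) where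
  isPartialEmbedding := fun _ ⟨_, _, hp⟩ => hp.isPartialEmbedding
  forth _ hp x _ :=
    have ⟨q, hq, hpq, hx, _⟩ := hC.exists_closedAutomorphism_extension hH hp x
    ⟨q, hq, hpq, hx⟩
  back _ hp y _ :=
    have ⟨q, hq, hpq, _, hy⟩ := hC.exists_closedAutomorphism_extension hH hp y
    ⟨q, hq, hpq, hy⟩

theorem exists_closedAutomorphism_of_notMem_cl (hC : IsQMClass C) (hH : H ∈ C) (hX : X.Countable)
    {a b : H.carrier} (ha : a ∉ H.cl X) (hb : b ∉ H.cl X) :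
    ∃ p ∈ closedAutomorphisms H, (∀ x ∈ X, (x, x) ∈ p) ∧ (a, b) ∈ p := by
  have P := hC.pregeom H hH
  obtain ⟨h, hh, hXh, hab⟩ :=
    hC.exists_isClosureIso_insert hH hH hX hX (isClosureIso_diag H X) ha hb
  have fixes : ∀ x ∈ X, (x, x) ∈ h := fun x hx => hXh ⟨x, P.subset_cl X hx, rfl⟩
  by_cases hba : b ∈ H.cl (insert a X)
  · refine ⟨h, ⟨_, hX.insert a, hh.isPartialEmbedding, hh.pdom_eq, ?_⟩, fixes, hab⟩
    rw [hh.pimg_eq, P.cl_insert_eq_cl_insert hb hba]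
  · have hab' : a ∉ H.cl (insert b X) := fun h => hba (P.mem_cl_insert_of_mem_cl_insert ha h)
    obtain ⟨k, hk, hhk, -⟩ :=
      hC.exists_isClosureIso_insert hH hH (hX.insert a) (hX.insert b) hh hba hab'
    rw [insert_comm a b X] at hk
    exact ⟨k, ⟨_, (hX.insert a).insert b, hk⟩, fun x hx => hhk (fixes x hx), hhk hab⟩

end IsQMClass

/-- If `H ∈ C`, `X ⊆ H` is countable and `a, b ∈ H \ cl(X)`, then `a` and
`b` realise the same σ-type over `X`: they satisfy the same `L_{ω₁,ω}`-formulas with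
parameters from `X`. -/
theorem statement_4 {L : FirstOrder.Language.{v, w}} (C : Set (QMObj.{u} L))
    (hC : IsQMClass C) (H : QMObj.{u} L) (hH : H ∈ C)
    (X : Set H.carrier) (hX : X.Countable)
    (a b : H.carrier) (ha : a ∉ H.cl X) (hb : b ∉ H.cl X)
    (φ : InfFormula L (↥X ⊕ Fin 1) 0) :
    φ.RealizeP (fun _ => a) ↔ φ.RealizeP (fun _ => b) := by
  obtain ⟨p, hp, fixes, hab⟩ := hC.exists_closedAutomorphism_of_notMem_cl hH hX ha hb
  refine (hC.isBackAndForth_closedAutomorphisms hH).realize_iff φ hp ?_ fun i => i.elim0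
  rintro (x | _)
  · exact fixes x x.2
  · exact hab

end QM
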